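/- arXiv:2410.11729 — 8 statements merged into one kernel-verified Lean document; each statement's English description precedes it below -/
import Mathlib

section
/- Let α₀, β₀, z, m ∈ ℝ with α₀ ≠ 0, and let B = blockdiag(B(α₀,β₀), B(α₀,β₀)) (a 6×6 matrix). Let ℒ be the 6×6 real matrix with rows (1,0,0,0,0,0), (z,1,0,0,0,0), (z²/2, z, 1, m, 0, 0), (0,0,0,1,0,0), (0,0,0,z,1,0), (−m, 0, 0, z²/2, z, 1). Then ℒ is invertible and ℒᵀ B ℒ = B; equivalently, ℒ is a (B, B)-unitary operator: it is bijective and ⟨Bℒx, ℒy⟩ = ⟨Bx, y⟩ for all x, y ∈ ℂ⁶. -/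
open Matrix

/-- The standard Hermitian inner product on `ℂ^n`, conjugate-linear in the
second argument. -/
noncomputable def herm {n : Type*} [Fintype n] (x y : n → ℂ) : ℂ :=
  ∑ i, x i * (starRingEnd ℂ) (y i)

/-- `B(α,β)`: the 3×3 matrix with rows `(β,0,α)`, `(0,−α,0)`, `(α,0,0)`, viewed over `ℂ`. -/
noncomputable def Bmat (a b : ℝ) : Matrix (Fin 3) (Fin 3) ℂ :=
  !![(b : ℂ), 0, (a : ℂ); 0, -(a : ℂ), 0; (a : ℂ), 0, 0]

/-- `blockdiag(B(α,β), B(α,β))` as a 6×6 matrix over `ℂ`. -/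
noncomputable def B6 (a b : ℝ) : Matrix (Fin 6) (Fin 6) ℂ :=
  !![(b : ℂ), 0, (a : ℂ), 0, 0, 0;
     0, -(a : ℂ), 0, 0, 0, 0;
     (a : ℂ), 0, 0, 0, 0, 0;
     0, 0, 0, (b : ℂ), 0, (a : ℂ);
     0, 0, 0, 0, -(a : ℂ), 0;
     0, 0, 0, (a : ℂ), 0, 0]

/-- Example 4.8: the matrix `ℒ` of δ-type interactions for the Airy operator on a
looping-edge graph with two half-lines is a `(B,B)`-unitary operator. -/
theorem delta_interaction_unitary (a b z m : ℝ) (ha : a ≠ 0)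
    (ℒ : Matrix (Fin 6) (Fin 6) ℂ)
    (hℒ : ℒ = !![1, 0, 0, 0, 0, 0;
                 (z : ℂ), 1, 0, 0, 0, 0;
                 (z : ℂ) ^ 2 / 2, (z : ℂ), 1, (m : ℂ), 0, 0;
                 0, 0, 0, 1, 0, 0;
                 0, 0, 0, (z : ℂ), 1, 0;
                 -(m : ℂ), 0, 0, (z : ℂ) ^ 2 / 2, (z : ℂ), 1]) :
    IsUnit ℒ ∧ ℒᵀ * B6 a b * ℒ = B6 a b ∧
      Function.Bijective ℒ.mulVec ∧
      ∀ x y : Fin 6 → ℂ,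
        herm ((B6 a b).mulVec (ℒ.mulVec x)) (ℒ.mulVec y)
          = herm ((B6 a b).mulVec x) y := by
  have hmul : ℒ * !![1, 0, 0, 0, 0, 0;
                 -(z : ℂ), 1, 0, 0, 0, 0;
                 (z : ℂ) ^ 2 / 2, -(z : ℂ), 1, -(m : ℂ), 0, 0;
                 0, 0, 0, 1, 0, 0;
                 0, 0, 0, -(z : ℂ), 1, 0;
                 (m : ℂ), 0, 0, (z : ℂ) ^ 2 / 2, -(z : ℂ), 1] = 1 := by
    subst hℒ
    ext i j
    fin_cases i <;> fin_cases j <;>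
      simp [Matrix.mul_apply, Fin.sum_univ_succ] <;> ring
  have hB : ℒᵀ * B6 a b * ℒ = B6 a b := by
    subst hℒ
    ext i j
    fin_cases i <;> fin_cases j <;>
      simp [B6, Matrix.mul_apply, Fin.sum_univ_succ] <;> ring
  have hU : IsUnit ℒ := IsUnit.of_mul_eq_one _ hmul
  have hreal : ℒᴴ = ℒᵀ := by
    subst hℒ
    ext i j
    fin_cases i <;> fin_cases j <;> simp [Matrix.conjTranspose_apply]
  have hherm : ∀ x y : Fin 6 → ℂ, herm x y = x ⬝ᵥ star y := fun x y => rfl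
  refine ⟨hU, hB, ⟨Matrix.mulVec_injective_iff_isUnit.2 hU, Matrix.mulVec_surjective_iff_isUnit.2 hU⟩, fun x y => ?_⟩
  rw [hherm, hherm, Matrix.star_mulVec, hreal, dotProduct_comm,
    ← Matrix.dotProduct_mulVec, Matrix.mulVec_mulVec, Matrix.mulVec_mulVec,
    hB, dotProduct_comm]
end

section
/- Let α₀, β₀, z ∈ ℝ and let δ_z be the 3×3 real matrix with rows (1,0,0), (z,1,0), (z²/2, z, 1). Then δ_zᵀ B(α₀,β₀) δ_z = B(α₀,β₀). Consequently, for every integer k ≥ 1, the 3(k+1)×3(k+1) block-diagonal matrix ℒ = blockdiag(δ_z, …, δ_z) (k+1 blocks) is invertible and satisfies ℒᵀ B ℒ = B, where B = blockdiag(B(α₀,β₀), …, B(α₀,β₀)) (k+1 blocks); that is, ℒ is bijective and ⟨Bℒx, ℒy⟩ = ⟨Bx, y⟩ for all x, y ∈ ℂ^{3(k+1)}. -/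
open Matrix

/-- `δ_z`: the 3×3 matrix with rows `(1,0,0)`, `(z,1,0)`, `(z²/2,z,1)`, viewed over `ℂ`. -/
noncomputable def deltaz (z : ℝ) : Matrix (Fin 3) (Fin 3) ℂ :=
  !![1, 0, 0; (z : ℂ), 1, 0; (z : ℂ) ^ 2 / 2, (z : ℂ), 1]

lemma deltaz_conj (a b z : ℝ) : (deltaz z)ᵀ * Bmat a b * deltaz z = Bmat a b := by
  ext i j
  fin_cases i <;> fin_cases j <;>
    simp [deltaz, Bmat, Matrix.mul_apply, Fin.sum_univ_three] <;> ring

lemma deltaz_star (z : ℝ) : (deltaz z)ᴴ = (deltaz z)ᵀ := by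
  ext i j
  fin_cases i <;> fin_cases j <;> simp [deltaz]

lemma deltaz_det (z : ℝ) : (deltaz z).det = 1 := by
  simp [deltaz, Matrix.det_fin_three]

lemma herm_eq {n : Type*} [Fintype n] (x y : n → ℂ) : herm x y = x ⬝ᵥ star y := rfl

/-- Example 4.8 (δ-type interactions on a looping-edge graph with `2k` half-lines):
`δ_zᵀ B(α₀,β₀) δ_z = B(α₀,β₀)`, and consequently, for every `k ≥ 1`, the block-diagonal
matrix `ℒ = blockdiag(δ_z, …, δ_z)` (`k+1` blocks) is invertible and `(B,B)`-unitary,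
where `B = blockdiag(B(α₀,β₀), …, B(α₀,β₀))`. -/
theorem deltaz_unitary (a b z : ℝ) :
    (deltaz z)ᵀ * Bmat a b * deltaz z = Bmat a b ∧
    ∀ k : ℕ, 1 ≤ k →
      ∀ ℒ B : Matrix (Fin 3 × Fin (k + 1)) (Fin 3 × Fin (k + 1)) ℂ,
        ℒ = Matrix.blockDiagonal (fun _ : Fin (k + 1) => deltaz z) →
        B = Matrix.blockDiagonal (fun _ : Fin (k + 1) => Bmat a b) →
        IsUnit ℒ ∧ ℒᵀ * B * ℒ = B ∧
          Function.Bijective ℒ.mulVec ∧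
          ∀ x y : Fin 3 × Fin (k + 1) → ℂ,
            herm (B.mulVec (ℒ.mulVec x)) (ℒ.mulVec y) = herm (B.mulVec x) y := by
  refine ⟨deltaz_conj a b z, ?_⟩
  rintro k - ℒ B hL hB
  have hu : IsUnit ℒ := by
    rw [Matrix.isUnit_iff_isUnit_det, hL, Matrix.det_blockDiagonal]
    simp [deltaz_det]
  have hconj : ℒᵀ * B * ℒ = B := by
    rw [hL, hB, Matrix.blockDiagonal_transpose, ← Matrix.blockDiagonal_mul,
      ← Matrix.blockDiagonal_mul]
    simp only [deltaz_conj]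
  have hstar : ℒᴴ = ℒᵀ := by
    rw [hL, Matrix.blockDiagonal_conjTranspose, Matrix.blockDiagonal_transpose]
    simp only [deltaz_star]
  refine ⟨hu, hconj, ?_, ?_⟩
  · exact ⟨Matrix.mulVec_injective_iff_isUnit.2 hu, Matrix.mulVec_surjective_iff_isUnit.2 hu⟩
  · intro x y
    rw [herm_eq, herm_eq, Matrix.star_mulVec, hstar, Matrix.vecMul_transpose,
      Matrix.dotProduct_mulVec, ← Matrix.mulVec_transpose, Matrix.mulVec_mulVec,
      Matrix.mulVec_mulVec, hconj]
end

section
/- Let α₀, β₀, m₁, m₂, m₃, m₄ ∈ ℝ with α₀ ≠ 0, and let B = blockdiag(B(α₀,β₀), B(α₀,β₀)) (a 6×6 matrix). Let ℒ be the 6×6 real matrix with rows (1,0,0,0,0,0), (m₁,0,0,m₂,1,0), ((m₁²+1)/2, 1, 1, m₃, m₁, 0), (0,0,0,1,0,0), (1,1,0,m₄,0,0), (m₄−m₃+m₁m₂, m₄, 0, (m₂²+m₄²)/2, m₂, 1). Then ℒ is invertible and ℒᵀ B ℒ = B; equivalently, ℒ is a (B, B)-unitary operator: it is bijective and ⟨Bℒx,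 ℒy⟩ = ⟨Bx, y⟩ for all x, y ∈ ℂ⁶. -/
open Matrix

/-- Example 4.10: a four-parameter family of `(B,B)`-unitary boundary operators for the
Airy operator on a looping-edge graph with two half-lines. -/
theorem example410_unitary (a b m1 m2 m3 m4 : ℝ) (ha : a ≠ 0)
    (ℒ : Matrix (Fin 6) (Fin 6) ℂ)
    (hℒ : ℒ = !![1, 0, 0, 0, 0, 0;
                 (m1 : ℂ), 0, 0, (m2 : ℂ), 1, 0;
                 ((m1 : ℂ) ^ 2 + 1) / 2, 1, 1, (m3 : ℂ), (m1 : ℂ), 0;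
                 0, 0, 0, 1, 0, 0;
                 1, 1, 0, (m4 : ℂ), 0, 0;
                 (m4 : ℂ) - (m3 : ℂ) + (m1 : ℂ) * (m2 : ℂ), (m4 : ℂ), 0,
                   ((m2 : ℂ) ^ 2 + (m4 : ℂ) ^ 2) / 2, (m2 : ℂ), 1]) :
    IsUnit ℒ ∧ ℒᵀ * B6 a b * ℒ = B6 a b ∧
      Function.Bijective ℒ.mulVec ∧
      ∀ x y : Fin 6 → ℂ,
        herm ((B6 a b).mulVec (ℒ.mulVec x)) (ℒ.mulVec y)
          = herm ((B6 a b).mulVec x) y := by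
  have hB : ℒᵀ * B6 a b * ℒ = B6 a b := by
    subst hℒ
    ext i j
    fin_cases i <;> fin_cases j <;>
      simp [B6, Matrix.mul_apply, Fin.sum_univ_succ] <;> ring
  have hreal : ℒᴴ = ℒᵀ := by
    subst hℒ
    ext i j
    fin_cases i <;> fin_cases j <;> simp [Matrix.conjTranspose_apply]
  have hac : (a : ℂ) ≠ 0 := by exact_mod_cast ha
  have hinv : ∃ C : Matrix (Fin 6) (Fin 6) ℂ, C * B6 a b = 1 := by
    refine ⟨!![0, 0, 1 / (a : ℂ), 0, 0, 0;
      0, -1 / (a : ℂ), 0, 0, 0, 0;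
      1 / (a : ℂ), 0, -(b : ℂ) / (a : ℂ) ^ 2, 0, 0, 0;
      0, 0, 0, 0, 0, 1 / (a : ℂ);
      0, 0, 0, 0, -1 / (a : ℂ), 0;
      0, 0, 0, 1 / (a : ℂ), 0, -(b : ℂ) / (a : ℂ) ^ 2], ?_⟩
    ext i j
    fin_cases i <;> fin_cases j <;>
      simp [B6, Matrix.mul_apply, Fin.sum_univ_succ, hac] <;> field_simp <;> ring
  obtain ⟨C, hC⟩ := hinv
  have hl : (C * ℒᵀ * B6 a b) * ℒ = 1 := by
    rw [← hC, Matrix.mul_assoc C, Matrix.mul_assoc C, hB]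
  have hr : ℒ * (C * ℒᵀ * B6 a b) = 1 := mul_eq_one_comm.mp hl
  have hU : IsUnit ℒ := ⟨⟨ℒ, _, hr, hl⟩, rfl⟩
  refine ⟨hU, hB, ⟨Matrix.mulVec_injective_iff_isUnit.mpr hU,
    Matrix.mulVec_surjective_iff_isUnit.mpr hU⟩, ?_⟩
  have hh : ∀ u v : Fin 6 → ℂ, herm u v = star v ⬝ᵥ u := by
    intro u v
    simp [herm, dotProduct, mul_comm]
  intro x y
  rw [hh, hh, Matrix.star_mulVec, hreal, ← Matrix.dotProduct_mulVec, Matrix.mulVec_mulVec,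
    Matrix.mulVec_mulVec, hB]
end

section
/- Let α > 0 and m₁, m₂, m₃ ∈ ℝ with m₃ ≠ 0, and suppose m₃² + m₁² ≤ 2, m₂²(m₁² + 1) ≤ 2, m₁(m₃² − m₂²) = 0, m₁² + m₂² ≤ 1, and m₁²m₂²/m₃² + m₃² ≤ 2. Let D₊ = diag(α, α) and D₋ = diag(α/2, α/2), let L be the 2×2 real matrix with rows (m₁, m₂), (m₃, −m₁m₂/m₃), and let L^# be the 2×2 real matrix with rows (m₁/2, m₃/2), (m₂/2, −m₁m₂/(2m₃)). Then ⟨D₋ L x, L x⟩ ≤ ⟨D₊ x, x⟩ for all x ∈ ℂ² and ⟨D₊ L^# y, L^# y⟩ ≤ ⟨D₋ y, y⟩ for all y ∈ ℂ². -/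
open Matrix ComplexOrder

/-- A real 2×2 matrix with orthogonal columns `(p,r)`, `(q,s)` of square norm at most `c`. -/
theorem real_bound (p q r s c u v : ℝ) (ho : p * q + r * s = 0)
    (hp : p ^ 2 + r ^ 2 ≤ c) (hq : q ^ 2 + s ^ 2 ≤ c) :
    (p * u + q * v) ^ 2 + (r * u + s * v) ^ 2 ≤ c * (u ^ 2 + v ^ 2) := by
  have e : (p * u + q * v) ^ 2 + (r * u + s * v) ^ 2
      = (p ^ 2 + r ^ 2) * u ^ 2 + (q ^ 2 + s ^ 2) * v ^ 2 := by
    linear_combination 2 * u * v * ho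
  nlinarith [mul_le_mul_of_nonneg_right hp (sq_nonneg u),
    mul_le_mul_of_nonneg_right hq (sq_nonneg v)]

theorem herm_bound (d e p q r s : ℝ) (c : ℝ) (hd : 0 ≤ d) (hc : d * c = e)
    (ho : p * q + r * s = 0) (hp : p ^ 2 + r ^ 2 ≤ c) (hq : q ^ 2 + s ^ 2 ≤ c)
    (x : Fin 2 → ℂ) :
    herm ((!![(d : ℂ), 0; 0, (d : ℂ)]).mulVec ((!![(p : ℂ), (q : ℂ); (r : ℂ), (s : ℂ)]).mulVec x))
      ((!![(p : ℂ), (q : ℂ); (r : ℂ), (s : ℂ)]).mulVec x)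
      ≤ herm ((!![(e : ℂ), 0; 0, (e : ℂ)]).mulVec x) x := by
  have k1 := mul_le_mul_of_nonneg_left
    (real_bound p q r s c (x 0).re (x 1).re ho hp hq) hd
  have k2 := mul_le_mul_of_nonneg_left
    (real_bound p q r s c (x 0).im (x 1).im ho hp hq) hd
  rw [← mul_assoc, hc] at k1 k2
  rw [Complex.le_def]
  simp [herm, Matrix.mulVec, dotProduct, Fin.sum_univ_two]
  constructor
  · nlinarith [k1, k2]
  · ring

/-- Example 4.25: under the stated parameter conditions, `L` is a `(𝒦₊,𝒦₋)`-contraction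
and its Krein adjoint `L^#` is a `(𝒦₋,𝒦₊)`-contraction, where `𝒦₊ = (ℂ², ⟨D₊·,·⟩)` and
`𝒦₋ = (ℂ², ⟨D₋·,·⟩)` with `D₊ = diag(α,α)`, `D₋ = diag(α/2,α/2)`. -/
theorem tadpole_derivative_contraction (a m1 m2 m3 : ℝ) (ha : 0 < a) (hm3 : m3 ≠ 0)
    (h1 : m3 ^ 2 + m1 ^ 2 ≤ 2)
    (h2 : m2 ^ 2 * (m1 ^ 2 + 1) ≤ 2)
    (h3 : m1 * (m3 ^ 2 - m2 ^ 2) = 0)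
    (h4 : m1 ^ 2 + m2 ^ 2 ≤ 1)
    (h5 : m1 ^ 2 * m2 ^ 2 / m3 ^ 2 + m3 ^ 2 ≤ 2)
    (Dp Dm L Lsharp : Matrix (Fin 2) (Fin 2) ℂ)
    (hDp : Dp = !![(a : ℂ), 0; 0, (a : ℂ)])
    (hDm : Dm = !![((a / 2 : ℝ) : ℂ), 0; 0, ((a / 2 : ℝ) : ℂ)])
    (hL : L = !![(m1 : ℂ), (m2 : ℂ); (m3 : ℂ), -((m1 * m2 / m3 : ℝ) : ℂ)])
    (hLs : Lsharp = !![((m1 / 2 : ℝ) : ℂ), ((m3 / 2 : ℝ) : ℂ);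
                       ((m2 / 2 : ℝ) : ℂ), -((m1 * m2 / (2 * m3) : ℝ) : ℂ)]) :
    (∀ x : Fin 2 → ℂ,
        herm (Dm.mulVec (L.mulVec x)) (L.mulVec x) ≤ herm (Dp.mulVec x) x) ∧
    (∀ y : Fin 2 → ℂ,
        herm (Dp.mulVec (Lsharp.mulVec y)) (Lsharp.mulVec y) ≤ herm (Dm.mulVec y) y) := by
  subst hDp hDm hL hLs
  have o1 : m1 * m2 + m3 * (-(m1 * m2 / m3)) = 0 := by field_simp; ring
  have o2 : m1 * m3 + m2 * (-(m1 * m2 / m3)) = 0 := by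
    field_simp
    linear_combination h3
  have n1 : m3 ^ 2 + (-(m1 * m2 / m3)) ^ 2 ≤ 2 := by
    have : (-(m1 * m2 / m3)) ^ 2 = m1 ^ 2 * m2 ^ 2 / m3 ^ 2 := by ring
    linarith
  have n2 : m2 ^ 2 + (-(m1 * m2 / m3)) ^ 2 ≤ 2 := by
    rcases mul_eq_zero.mp h3 with h | h
    · subst h
      simp
      nlinarith
    · have : m2 ^ 2 = m3 ^ 2 := by linarith
      linarith
  constructor
  · intro x
    have := herm_bound (a / 2) a m1 m2 m3 (-(m1 * m2 / m3)) 2 (by positivity) (by ring)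
      o1 (by linarith) n2 x
    rw [Complex.ofReal_neg] at this
    exact this
  · intro y
    have e : m1 * m2 / (2 * m3) = (m1 * m2 / m3) / 2 := by field_simp
    have := herm_bound a (a / 2) (m1 / 2) (m3 / 2) (m2 / 2) (-(m1 * m2 / (2 * m3))) (1 / 2)
      ha.le (by ring) (by rw [e]; linarith) (by linarith) (by rw [e]; linarith) y
    rw [Complex.ofReal_neg] at this
    exact this
end

section
/- Let N ≥ 1 be an integer and let m_{ij} ∈ ℝ for 1 ≤ i, j ≤ N+1 with m_{ij} = m_{ji}. Let ℒ_N be the 2(N+1)×2(N+1) real matrix composed of 2×2 blocks (A_{ij})_{1≤i,j≤N+1} where A_{ii} is the matrix with rows (1,0), (m_{ii}, N+1), and for i ≠ j, A_{ij} is the matrix with rows (0,0), (m_{ij}, 0). Then ℒ_N is invertible and ℒ_Nᵀ P₋ ℒ_N = P₊; equivalently, ℒ_N is bijective and ⟨P₋ℒ_N x, ℒ_N y⟩ = ⟨P₊x, y⟩ for all x, y ∈ ℂ^{2(N+1)} (a (𝒥₊,𝒥₋)-unitary operator). -/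
open Matrix

/-- `P₀`: the 2×2 matrix with rows `(0,1)`, `(−1,0)`, over `ℂ`. -/
def P0mat : Matrix (Fin 2) (Fin 2) ℂ := !![0, 1; -1, 0]

/-- The 2×2 block `A_{ij}` of the matrix `ℒ_N` of Example 5.8: `A_{ii}` has rows
`(1,0)`, `(m_{ii}, N+1)` and, for `i ≠ j`, `A_{ij}` has rows `(0,0)`, `(m_{ij}, 0)`. -/
noncomputable def deltaBlock (N : ℕ) (m : Fin (N + 1) → Fin (N + 1) → ℝ)
    (i j : Fin (N + 1)) : Matrix (Fin 2) (Fin 2) ℂ :=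
  if i = j then !![1, 0; (m i i : ℂ), ((N : ℂ) + 1)] else !![0, 0; (m i j : ℂ), 0]

/-- Example 5.8: the block matrix `ℒ_N` with blocks `A_{ij}` is invertible and
`(𝒥₊,𝒥₋)`-unitary: `ℒ_Nᵀ P₋ ℒ_N = P₊` where `P₊ = blockdiag(P₀,…,P₀)` and
`P₋ = (1/(N+1)) P₊`. -/
theorem deltaN_unitary (N : ℕ) (hN : 1 ≤ N)
    (m : Fin (N + 1) → Fin (N + 1) → ℝ) (hm : ∀ i j, m i j = m j i)
    (Pp Pm LN : Matrix (Fin 2 × Fin (N + 1)) (Fin 2 × Fin (N + 1)) ℂ)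
    (hPp : Pp = Matrix.blockDiagonal fun _ : Fin (N + 1) => P0mat)
    (hPm : Pm = (((N : ℂ) + 1))⁻¹ • Pp)
    (hLN : LN = fun p q => deltaBlock N m p.2 q.2 p.1 q.1) :
    IsUnit LN ∧ LNᵀ * Pm * LN = Pp ∧
      Function.Bijective LN.mulVec ∧
      ∀ x y : Fin 2 × Fin (N + 1) → ℂ,
        herm (Pm.mulVec (LN.mulVec x)) (LN.mulVec y) = herm (Pp.mulVec x) y := by
  have hc : ((N : ℂ) + 1) ≠ 0 := Nat.cast_add_one_ne_zero N
  have hPe : ∀ a i b j, Pp (a, i) (b, j) = if i = j then P0mat a b else 0 := by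
    intro a i b j
    rw [hPp, Matrix.blockDiagonal_apply]
  have hLe : ∀ a i b j, LN (a, i) (b, j) = deltaBlock N m i j a b := by
    intro a i b j
    rw [hLN]
  have e00 : ∀ i j, deltaBlock N m i j 0 0 = if i = j then 1 else 0 := by
    intro i j; unfold deltaBlock; split_ifs <;> simp
  have e01 : ∀ i j, deltaBlock N m i j 0 1 = 0 := by
    intro i j; unfold deltaBlock; split_ifs <;> simp
  have e10 : ∀ i j, deltaBlock N m i j 1 0 = (m i j : ℂ) := by
    intro i j; unfold deltaBlock; split_ifs with h <;> simp [h]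
  have e11 : ∀ i j, deltaBlock N m i j 1 1 = if i = j then (N : ℂ) + 1 else 0 := by
    intro i j; unfold deltaBlock; split_ifs <;> simp
  have hmain : LNᵀ * Pm * LN = Pp := by
    rw [hPm, Matrix.mul_smul, Matrix.smul_mul]
    ext ⟨a, i⟩ ⟨b, j⟩
    fin_cases a <;> fin_cases b <;>
      simp [Matrix.mul_apply, Fintype.sum_prod_type, hPe, hLe, e00, e01, e10, e11, P0mat, hm i j,
        hc]
    · simp only [eq_comm]
    · have h : ((N : ℂ) + 1)⁻¹ * (-1 + -(N : ℂ)) = -1 := by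
        field_simp
        ring
      rw [h]
  have hPP : Pp * Pp = -1 := by
    rw [hPp, ← Matrix.blockDiagonal_mul]
    have : P0mat * P0mat = -1 := by
      ext a b
      fin_cases a <;> fin_cases b <;> simp [P0mat]
    ext ⟨a, i⟩ ⟨b, j⟩
    simp only [this, Matrix.blockDiagonal_apply, Matrix.neg_apply, Matrix.one_apply, Prod.mk.injEq]
    split_ifs <;> simp_all
  have hU : IsUnit LN := by
    have h1 : (-(Pp * (LNᵀ * Pm))) * LN = 1 := by
      rw [Matrix.neg_mul, Matrix.mul_assoc, hmain, hPP, neg_neg]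
    exact IsUnit.of_mul_eq_one_right _ h1
  have hreal : ∀ p q, star (LN p q) = LN p q := by
    rintro ⟨a, i⟩ ⟨b, j⟩
    rw [hLe]
    fin_cases a <;> fin_cases b <;> simp [e00, e01, e10, e11, apply_ite (starRingEnd ℂ)]
  refine ⟨hU, hmain, ⟨Matrix.mulVec_injective_iff_isUnit.mpr hU,
    Matrix.mulVec_surjective_iff_isUnit.mpr hU⟩, ?_⟩
  intro x y
  have hh : ∀ u v : Fin 2 × Fin (N + 1) → ℂ, herm u v = u ⬝ᵥ star v := fun u v => rfl
  have hs : star (LN.mulVec y) = LN.mulVec (star y) := by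
    ext p
    simp only [Matrix.mulVec, dotProduct, Pi.star_apply, star_sum, star_mul', hreal]
  rw [hh, hh, hs, Matrix.dotProduct_mulVec, ← Matrix.mulVec_transpose, Matrix.mulVec_mulVec,
    Matrix.mulVec_mulVec, ← hmain]
end

section
/- Let N ≥ 1 be an integer, let m_{ij} ∈ ℝ for 1 ≤ i, j ≤ N+1 with m_{ij} = m_{ji}, and let ℒ_N be the 2(N+1)×2(N+1) real matrix composed of 2×2 blocks (A_{ij})_{1≤i,j≤N+1} where A_{ii} has rows (1,0), (m_{ii}, N+1), and for i ≠ j, A_{ij} has rows (0,0), (m_{ij}, 0). Let a, a', b₁, b₁', …, b_N, b_N', c, c' ∈ ℂ and suppose ℒ_N · (a, a', b₁, b₁', …, b_N, b_N')ᵀ = (c, c', c, c', …, c, c')ᵀ (the pair (c, c') repeated N+1 times). Then a = c and b_j = c for all j = 1, …, N, and c' − a' = Σ_{j=1}^{N} b_j' + Z·a, where Z = (1/(N+1))·Σ_{i,j=1}^{N+1} m_{ij}. -/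
open Matrix

/-- Boundary-data vector `(a, a', b₁, b₁', …, b_N, b_N')` indexed by `Fin 2 × Fin (N+1)`,
where the component `(e, i)` is the value (`e = 0`) or derivative (`e = 1`) at block `i`. -/
noncomputable def bdryVec (N : ℕ) (a a' : ℂ) (b b' : Fin N → ℂ) :
    Fin 2 × Fin (N + 1) → ℂ := fun p =>
  if h : p.2 = 0 then (if p.1 = 0 then a else a')
  else (if p.1 = 0 then b (p.2.pred h) else b' (p.2.pred h))

/-- Example 5.8 (boundary-condition computation): if `ℒ_N · (a,a',b₁,b₁',…,b_N,b_N')ᵀ`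
equals `(c,c',…,c,c')ᵀ`, then `a = c`, `b_j = c` for all `j`, and
`c' − a' = ∑_j b_j' + Z a` with `Z = (1/(N+1)) ∑_{i,j} m_{ij}`. -/
theorem deltaN_boundary_conditions (N : ℕ) (hN : 1 ≤ N)
    (m : Fin (N + 1) → Fin (N + 1) → ℝ) (hm : ∀ i j, m i j = m j i)
    (LN : Matrix (Fin 2 × Fin (N + 1)) (Fin 2 × Fin (N + 1)) ℂ)
    (hLN : LN = fun p q => deltaBlock N m p.2 q.2 p.1 q.1)
    (a a' c c' : ℂ) (b b' : Fin N → ℂ)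
    (h : LN.mulVec (bdryVec N a a' b b')
        = bdryVec N c c' (fun _ => c) (fun _ => c')) :
    a = c ∧ (∀ j : Fin N, b j = c) ∧
      c' - a' = (∑ j : Fin N, b' j)
        + (((∑ i : Fin (N + 1), ∑ j : Fin (N + 1), m i j) / (N + 1) : ℝ) : ℂ) * a := by
  have e00 : ∀ i j, deltaBlock N m i j 0 0 = if i = j then 1 else 0 := by
    intro i j; unfold deltaBlock; split_ifs <;> simp
  have e01 : ∀ i j, deltaBlock N m i j 0 1 = 0 := by
    intro i j; unfold deltaBlock; split_ifs <;> simp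
  have e10 : ∀ i j, deltaBlock N m i j 1 0 = (m i j : ℂ) := by
    intro i j; unfold deltaBlock; split_ifs with hij
    · subst hij; simp
    · simp
  have e11 : ∀ i j, deltaBlock N m i j 1 1 = if i = j then (N : ℂ) + 1 else 0 := by
    intro i j; unfold deltaBlock; split_ifs <;> simp
  have c0 : ∀ i, bdryVec N c c' (fun _ => c) (fun _ => c') (0, i) = c := by
    intro i; simp [bdryVec]
  have c1 : ∀ i, bdryVec N c c' (fun _ => c) (fun _ => c') (1, i) = c' := by
    intro i; simp [bdryVec]
  have v0 : ∀ i, bdryVec N a a' b b' (0, i) = c := by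
    intro i
    have h0 := congrFun h (0, i)
    rw [c0, hLN] at h0
    simpa [Matrix.mulVec, dotProduct, Fintype.sum_prod_type, e00, e01] using h0
  have v1 : ∀ i, (∑ j, (m i j : ℂ)) * c
      + ((N : ℂ) + 1) * bdryVec N a a' b b' (1, i) = c' := by
    intro i
    have h0 := congrFun h (1, i)
    rw [c1, hLN] at h0
    simpa [Matrix.mulVec, dotProduct, Fintype.sum_prod_type, e10, e11, v0,
      Finset.sum_mul] using h0
  have ha : a = c := by simpa [bdryVec] using v0 0
  refine ⟨ha, fun j => by simpa [bdryVec] using v0 j.succ, ?_⟩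
  have hs := Finset.sum_congr (rfl : (Finset.univ : Finset (Fin (N + 1))) = Finset.univ)
    (fun i _ => v1 i)
  rw [Finset.sum_add_distrib, ← Finset.sum_mul, ← Finset.mul_sum,
    Fin.sum_univ_succ (fun i => bdryVec N a a' b b' (1, i))] at hs
  have w0 : bdryVec N a a' b b' (1, 0) = a' := by simp [bdryVec]
  have w1 : ∀ j : Fin N, bdryVec N a a' b b' (1, j.succ) = b' j := by
    intro j; simp [bdryVec]
  simp only [w0, w1, Finset.sum_const, Finset.card_univ, Fintype.card_fin, nsmul_eq_mul] at hs
  have hne : (N : ℂ) + 1 ≠ 0 := Nat.cast_add_one_ne_zero N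
  push_cast at hs ⊢
  rw [ha]
  field_simp
  linear_combination -hs
end

section
/- Let m₁, m₂, m₃, m₄ ∈ ℝ with m₁ ≠ 0. Let P₊ = blockdiag(P₀, P₀) and P₋ = (1/2)·P₊ (4×4 matrices), and let ℒ be the 4×4 real matrix with rows (m₁, m₂, 0, 0), (0, 2/m₁, 0, m₃), (−m₁m₃, −m₂m₃, 2, m₄), (0, 0, 0, 1). Then ℒ is invertible and ℒᵀ P₋ ℒ = P₊; equivalently, ℒ is bijective and ⟨P₋ℒx, ℒy⟩ = ⟨P₊x, y⟩ for all x, y ∈ ℂ⁴ (a (𝒥₊,𝒥₋)-unitary operator). -/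
open Matrix

/-- `P₊ = blockdiag(P₀, P₀)` with `P₀ = !![0,1;−1,0]`, as a 4×4 matrix over `ℂ`. -/
def Pplus4 : Matrix (Fin 4) (Fin 4) ℂ :=
  !![0, 1, 0, 0; -1, 0, 0, 0; 0, 0, 0, 1; 0, 0, -1, 0]

/-- Example 5.10 (δ'-type interactions for the Schrödinger operator on a tadpole graph):
the matrix `ℒ` is invertible and `(𝒥₊,𝒥₋)`-unitary, where `𝒥₊, 𝒥₋` carry the forms
`⟨P₊·,·⟩` and `⟨P₋·,·⟩` with `P₋ = (1/2)P₊`. -/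
theorem deltaprime_tadpole_unitary (m1 m2 m3 m4 : ℝ) (hm1 : m1 ≠ 0)
    (Pp Pm ℒ : Matrix (Fin 4) (Fin 4) ℂ)
    (hPp : Pp = Pplus4)
    (hPm : Pm = (1 / 2 : ℂ) • Pplus4)
    (hℒ : ℒ = !![(m1 : ℂ), (m2 : ℂ), 0, 0;
                 0, 2 / (m1 : ℂ), 0, (m3 : ℂ);
                 -(m1 : ℂ) * (m3 : ℂ), -(m2 : ℂ) * (m3 : ℂ), 2, (m4 : ℂ);
                 0, 0, 0, 1]) :
    IsUnit ℒ ∧ ℒᵀ * Pm * ℒ = Pp ∧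
      Function.Bijective ℒ.mulVec ∧
      ∀ x y : Fin 4 → ℂ,
        herm (Pm.mulVec (ℒ.mulVec x)) (ℒ.mulVec y) = herm (Pp.mulVec x) y := by
  have hm : (m1 : ℂ) ≠ 0 := by exact_mod_cast hm1
  have hunit : IsUnit ℒ := by
    rw [Matrix.isUnit_iff_isUnit_det, isUnit_iff_ne_zero]
    have hdet : ℒ.det = 4 := by
      subst hℒ
      simp [Matrix.det_succ_row_zero, Fin.sum_univ_succ, Fin.succAbove]
      field_simp
      try norm_num
    rw [hdet]
    norm_num
  have hform : ℒᵀ * Pm * ℒ = Pp := by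
    subst hℒ hPp hPm
    ext i j
    fin_cases i <;> fin_cases j <;>
      simp [Pplus4, Matrix.mul_apply, Fin.sum_univ_succ] <;> field_simp <;> ring
  have hstar : ∀ i j, (starRingEnd ℂ) (ℒ i j) = ℒ i j := by
    intro i j
    have h2 : (starRingEnd ℂ) 2 = 2 := Complex.conj_ofNat 2
    subst hℒ
    fin_cases i <;> fin_cases j <;> simp [h2]
  refine ⟨hunit, hform, ⟨Matrix.mulVec_injective_iff_isUnit.2 hunit,
    Matrix.mulVec_surjective_iff_isUnit.2 hunit⟩, ?_⟩
  intro x y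
  have hh : ∀ u v : Fin 4 → ℂ, herm u v = u ⬝ᵥ star v := fun u v => rfl
  have hs : star (ℒ.mulVec y) = ℒ.mulVec (star y) := by
    ext i
    simp [Matrix.mulVec, dotProduct, hstar]
  rw [hh, hh, hs, ← hform, Matrix.dotProduct_mulVec, ← Matrix.mulVec_transpose]
  simp only [Matrix.mulVec_mulVec, Matrix.mul_assoc]
end

section
/- Let α > 0 and β ∈ ℝ, and consider the cubic polynomial p(z) = αz³ + βz − 1 over ℂ. Then p has no root with zero real part, and, counting roots with multiplicity, p has exactly one root with strictly positive real part and exactly two roots with strictly negative real part. Consequently, the polynomial q(z) = αz³ + βz + 1 has no root with zero real part, exactly two roots (with multiplicity) with strictly positive real part, and exactly one root with strictly negative real part. -/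
open Polynomial

/-- The cubic has a positive real root. -/
lemma airy_pos_root (a b : ℝ) (ha : 0 < a) : ∃ t : ℝ, 0 < t ∧ a * t ^ 3 + b * t = 1 := by
  have hM : (0 : ℝ) ≤ 1 + (1 + |b|) / a := by positivity
  have hc : ContinuousOn (fun t : ℝ => a * t ^ 3 + b * t) (Set.Icc 0 (1 + (1 + |b|) / a)) := by
    fun_prop
  have h1 : (1 : ℝ) ∈ Set.Icc ((fun t : ℝ => a * t ^ 3 + b * t) 0)
      ((fun t : ℝ => a * t ^ 3 + b * t) (1 + (1 + |b|) / a)) := by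
    refine ⟨by norm_num, ?_⟩
    have hk : a * (1 + (1 + |b|) / a) = a + 1 + |b| := by field_simp; ring
    have hge : (1 : ℝ) ≤ 1 + (1 + |b|) / a := by
      have : 0 ≤ (1 + |b|) / a := by positivity
      linarith
    show 1 ≤ a * (1 + (1 + |b|) / a) ^ 3 + b * (1 + (1 + |b|) / a)
    generalize 1 + (1 + |b|) / a = M at *
    have hb := neg_abs_le b
    have h2 : 1 ≤ a * M ^ 2 + b := by
      have : a * M ^ 2 = (a + 1 + |b|) * M := by rw [← hk]; ring
      have := abs_nonneg b
      nlinarith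
    nlinarith
  obtain ⟨t, ht, h⟩ := intermediate_value_Icc hM hc h1
  refine ⟨t, lt_of_le_of_ne ht.1 ?_, h⟩
  rintro rfl
  norm_num at h

/-- The three roots of the cubic. -/
lemma airy_roots (a b : ℝ) (ha : 0 < a) : ∃ t u v : ℂ, 0 < t.re ∧ u.re < 0 ∧ v.re < 0 ∧
    t + u + v = 0 ∧ a * (t * u * v) = 1 ∧ a * (t * u + t * v + u * v) = b := by
  obtain ⟨t, ht, h⟩ := airy_pos_root a b ha
  obtain ⟨w, hw⟩ := IsAlgClosed.exists_pow_nat_eq ((t ^ 2 - 4 / (a * t) : ℝ) : ℂ) two_pos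
  have hac : (a : ℂ) ≠ 0 := by exact_mod_cast ha.ne'
  have htc : (t : ℂ) ≠ 0 := by exact_mod_cast ht.ne'
  obtain ⟨u, v, hs, hm⟩ : ∃ u v : ℂ, u + v = -t ∧ u * v = ((1 / (a * t) : ℝ) : ℂ) := by
    refine ⟨(-t + w) / 2, (-t - w) / 2, by ring, ?_⟩
    have : (-t + w) / 2 * ((-t - w) / 2) = ((t : ℂ) ^ 2 - w ^ 2) / 4 := by ring
    rw [this, hw]
    push_cast
    field_simp
    ring
  have hpos : 0 < 1 / (a * t) := by positivity
  have hre := congrArg Complex.re hs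
  have him := congrArg Complex.im hs
  have mre := congrArg Complex.re hm
  have mim := congrArg Complex.im hm
  simp only [Complex.add_re, Complex.add_im, Complex.neg_re, Complex.neg_im, Complex.ofReal_re,
    Complex.ofReal_im, Complex.mul_re, Complex.mul_im] at hre him mre mim
  have hv : v.im = -u.im := by linarith
  have hneg : u.re < 0 ∧ v.re < 0 := by
    rw [hv] at mre mim
    have h0 : u.im * (v.re - u.re) = 0 := by linarith
    rcases mul_eq_zero.1 h0 with h0 | h0
    · rw [h0] at mre
      have hp : 0 < u.re * v.re := by linarith
      rcases mul_pos_iff.1 hp with h1 | h1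
      · linarith [h1.1, h1.2]
      · exact h1
    · constructor <;> linarith
  have hmm : (a : ℂ) * (t * u * v) = 1 := by
    have : (a : ℂ) * (t * u * v) = a * t * (u * v) := by ring
    rw [this, hm]
    push_cast
    field_simp
  refine ⟨t, u, v, by simpa using ht, hneg.1, hneg.2, by linear_combination hs, hmm, ?_⟩
  have hC : (a : ℂ) * t ^ 3 + b * t = 1 := by exact_mod_cast h
  apply mul_left_cancel₀ htc
  linear_combination hmm + a * t ^ 2 * hs - hC

/-- Roots of a split cubic. -/
lemma airy_split_roots (a x y z : ℂ) (ha : a ≠ 0) (p : Polynomial ℂ)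
    (hp : p = C a * ((X - C x) * (X - C y) * (X - C z))) : p.roots = {x, y, z} := by
  have : p = C a * (({x, y, z} : Multiset ℂ).map (fun r => X - C r)).prod := by
    rw [hp]; simp [mul_assoc]
  rw [this, roots_C_mul _ ha, roots_multiset_prod_X_sub_C]

/-- Root location for the cubic `αz³ + βz − 1` with `α > 0`, `β ∈ ℝ`: no root on the
imaginary axis, exactly one root (with multiplicity) with positive real part and two
with negative real part; the reflected cubic `αz³ + βz + 1` has the counts swapped. -/
theorem airy_cubic_root_location (a b : ℝ) (ha : 0 < a)
    (p q : Polynomial ℂ)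
    (hp : p = C (a : ℂ) * X ^ 3 + C (b : ℂ) * X - 1)
    (hq : q = C (a : ℂ) * X ^ 3 + C (b : ℂ) * X + 1) :
    (∀ z : ℂ, p.eval z = 0 → z.re ≠ 0) ∧
    (p.roots.filter (fun z => 0 < z.re)).card = 1 ∧
    (p.roots.filter (fun z => z.re < 0)).card = 2 ∧
    (∀ z : ℂ, q.eval z = 0 → z.re ≠ 0) ∧
    (q.roots.filter (fun z => 0 < z.re)).card = 2 ∧
    (q.roots.filter (fun z => z.re < 0)).card = 1 := by
  obtain ⟨t, u, v, ht, hu, hv, h1, h2, h3⟩ := airy_roots a b ha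
  have hac : (a : ℂ) ≠ 0 := by exact_mod_cast ha.ne'
  have e1 : (C t + C u + C v : ℂ[X]) = 0 := by rw [← C_add, ← C_add, h1, C_0]
  have e2 : (C (a : ℂ) * (C t * C u * C v) : ℂ[X]) = 1 := by
    simp only [← C_mul]; rw [h2, C_1]
  have e3 : (C (a : ℂ) * (C t * C u + C t * C v + C u * C v) : ℂ[X]) = C (b : ℂ) := by
    simp only [← C_mul, ← C_add]; rw [h3]
  have fp : p = C (a : ℂ) * ((X - C t) * (X - C u) * (X - C v)) := by
    rw [hp]
    linear_combination C (a : ℂ) * X ^ 2 * e1 - X * e3 + e2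
  have fq : q = C (a : ℂ) * ((X - C (-t)) * (X - C (-u)) * (X - C (-v))) := by
    rw [hq]
    simp only [C_neg]
    linear_combination -C (a : ℂ) * X ^ 2 * e1 - X * e3 - e2
  have rp := airy_split_roots _ _ _ _ hac p fp
  have rq := airy_split_roots _ _ _ _ hac q fq
  have zp : ∀ z : ℂ, p.eval z = 0 → z.re ≠ 0 := by
    intro z hz
    simp only [fp, eval_mul, eval_sub, eval_X, eval_C, mul_eq_zero, hac, false_or, sub_eq_zero] at hz
    rcases hz with (rfl | rfl) | rfl
    · exact ht.ne'
    · exact hu.ne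
    · exact hv.ne
  have zq : ∀ z : ℂ, q.eval z = 0 → z.re ≠ 0 := by
    intro z hz
    simp only [fq, eval_mul, eval_sub, eval_X, eval_C, mul_eq_zero, hac, false_or, sub_eq_zero] at hz
    rcases hz with (rfl | rfl) | rfl
    · simpa using ht.ne'
    · simpa using hu.ne
    · simpa using hv.ne
  refine ⟨zp, ?_, ?_, zq, ?_, ?_⟩ <;>
  simp [rp, rq, Multiset.insert_eq_cons, Multiset.filter_cons, Multiset.filter_singleton,
    ht, hu, hv, ht.not_gt, hu.not_gt, hv.not_gt]
end
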